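/- Let γ ∈ (0,1], σ > 0, and define z_s(x) = -2x / (γ(σ + x²) + √(γ²(σ + x²)² + 4γx²)) for x ∈ ℝ. Then |z_s(x)| < 1 for all x if and only if σ > (1-γ)²/(4γ²). -/

import Mathlib

/-!
Write `A = γ (σ + x²)`. For `x ≠ 0`, moving `A` to the other side and squaring turns
`2|x| < A + √(A² + 4γx²)` into `(1 - γ)|x| < A`, that is, `γ|x|² - (1 - γ)|x| + γσ > 0`
(`two_mul_lt_add_sqrt_iff`). This quadratic in `|x|` has its vertex at
`|x| = (1 - γ)/(2γ) ≥ 0`, so it is positive everywhere iff `(1 - γ)² < 4γ²σ`. At `x = 0` the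
bound is trivial, and this covers the degenerate vertex when `γ = 1`, since `σ > 0`.
-/

/-- Elimination of the square root in `|z_s(x)| < 1`, with `t = |x|` and `A = γ (σ + x²)`. -/
lemma two_mul_lt_add_sqrt_iff {γ A t : ℝ} (hγ : 0 < γ) (hA : 0 < A) (ht : 0 < t) :
    2 * t < A + Real.sqrt (A ^ 2 + 4 * γ * t ^ 2) ↔ (1 - γ) * t < A := by
  rw [← sub_lt_iff_lt_add']
  constructor
  · intro h
    by_contra! hle
    have hγt : 0 < γ * t := mul_pos hγ ht
    have : Real.sqrt (A ^ 2 + 4 * γ * t ^ 2) ≤ 2 * t - A := by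
      apply Real.sqrt_le_iff.mpr
      constructor
      · nlinarith
      · nlinarith [mul_le_mul_of_nonneg_left hle ht.le]
    linarith
  · intro h
    apply Real.lt_sqrt_of_sq_lt
    nlinarith [mul_lt_mul_of_pos_left h ht]

theorem stmt_1 (γ σ : ℝ) (hγ0 : 0 < γ) (hγ1 : γ ≤ 1) (hσ : 0 < σ) :
    (∀ x : ℝ,
        |(-2 * x) / (γ * (σ + x ^ 2) + Real.sqrt (γ ^ 2 * (σ + x ^ 2) ^ 2 + 4 * γ * x ^ 2))| < 1)
      ↔ σ > (1 - γ) ^ 2 / (4 * γ ^ 2) := by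
  have key : ∀ x : ℝ, x ≠ 0 →
      (|(-2 * x) / (γ * (σ + x ^ 2) + Real.sqrt (γ ^ 2 * (σ + x ^ 2) ^ 2 + 4 * γ * x ^ 2))| < 1
        ↔ (1 - γ) * |x| < γ * (σ + x ^ 2)) := by
    intro x hx
    have hA : 0 < γ * (σ + x ^ 2) := by positivity
    have hD : 0 < γ * (σ + x ^ 2) +
        Real.sqrt (γ ^ 2 * (σ + x ^ 2) ^ 2 + 4 * γ * x ^ 2) := by positivity
    rw [abs_div, abs_of_pos hD, div_lt_one hD, abs_mul, abs_neg, abs_two,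
      ← two_mul_lt_add_sqrt_iff hγ0 hA (abs_pos.mpr hx), sq_abs, mul_pow]
  rw [gt_iff_lt, div_lt_iff₀ (by positivity)]
  constructor
  · intro h
    rcases hγ1.eq_or_lt with rfl | hlt
    · linarith
    -- The test point is the vertex of the quadratic.
    · have hx : 0 < (1 - γ) / (2 * γ) := div_pos (by linarith) (by positivity)
      have h1 := (key _ hx.ne').mp (h _)
      rw [abs_of_pos hx] at h1
      have h2 := mul_lt_mul_of_pos_left h1 (show 0 < 4 * γ by positivity)
      have e1 : 4 * γ * ((1 - γ) * ((1 - γ) / (2 * γ))) = 2 * (1 - γ) ^ 2 := by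
        field_simp; ring
      have e2 : 4 * γ * (γ * (σ + ((1 - γ) / (2 * γ)) ^ 2)) = σ * (4 * γ ^ 2) + (1 - γ) ^ 2 := by
        field_simp; ring
      rw [e1, e2] at h2
      linarith
  · intro h x
    rcases eq_or_ne x 0 with rfl | hx
    · simp
    · rw [key x hx, ← sq_abs x]
      -- Completing the square, after multiplying through by `4γ`.
      have h4 : 0 < 4 * γ := by positivity
      refine lt_of_mul_lt_mul_left ?_ h4.le
      nlinarith [sq_nonneg (2 * γ * |x| - (1 - γ))]
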